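/- Let E₁, E₂ be real vector spaces, C₁ ⊂ E₁ \ {0} and C₂ ⊂ E₂ \ {0} convex cones with Hilbert projective (pseudo-)metrics θ₁, θ₂, and L : E₁ → E₂ a linear map with L(C₁) ⊂ C₂. If D := sup{θ₂(L v₁, L v₂) : v₁, v₂ ∈ C₁} is finite, then θ₂(L v₁, L v₂) ≤ (1 − e^{−D})·θ₁(v₁, v₂) for all v₁, v₂ ∈ C₁. -/

import Mathlib

open Set

noncomputable section

/-- A cone of a real vector space: a subset of `E \ {0}` closed under positive scalar
multiplication. -/
def IsCone {E : Type*} [AddCommGroup E] [Module ℝ E] (C : Set E) : Prop :=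
  (0 : E) ∉ C ∧ ∀ v ∈ C, ∀ s : ℝ, 0 < s → s • v ∈ C

/-- Convexity of a cone: closedness under positive linear combinations. -/
def IsConvexCone {E : Type*} [AddCommGroup E] [Module ℝ E] (C : Set E) : Prop :=
  IsCone C ∧ ∀ v₁ ∈ C, ∀ v₂ ∈ C, ∀ s₁ s₂ : ℝ, 0 < s₁ → 0 < s₂ → s₁ • v₁ + s₂ • v₂ ∈ C

/-- `α(v₁,v₂) = sup{s > 0 : v₂ - s•v₁ ∈ C}`. -/
def hilbertAlphaSet {E : Type*} [AddCommGroup E] [Module ℝ E] (C : Set E) (v₁ v₂ : E) :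
    Set ℝ := {s : ℝ | 0 < s ∧ v₂ - s • v₁ ∈ C}

/-- `β(v₁,v₂) = inf{s > 0 : s•v₁ - v₂ ∈ C}`. -/
def hilbertBetaSet {E : Type*} [AddCommGroup E] [Module ℝ E] (C : Set E) (v₁ v₂ : E) :
    Set ℝ := {s : ℝ | 0 < s ∧ s • v₁ - v₂ ∈ C}

open scoped Classical

/-- The Hilbert projective (pseudo-)metric `θ(v₁,v₂) = log(β(v₁,v₂)/α(v₁,v₂))`, with values
in `[0,∞]` (the value is `∞` when `β = ∞` or `α = 0`, i.e. when one of the defining sets is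
empty). -/
noncomputable def hilbertTheta {E : Type*} [AddCommGroup E] [Module ℝ E] (C : Set E)
    (v₁ v₂ : E) : EReal :=
  if (hilbertBetaSet C v₁ v₂).Nonempty ∧ (hilbertAlphaSet C v₁ v₂).Nonempty then
    ((Real.log (sInf (hilbertBetaSet C v₁ v₂) / sSup (hilbertAlphaSet C v₁ v₂)) : ℝ) : EReal)
  else ⊤

/-!
Let `a • v ≤ w ≤ b • v` for the order defined by the cone. The diameter bound, applied to the
images of the differences `w - a • v` and `b • v - w`, compares these with each other by constants
`t ≤ s` with `t / s` arbitrarily close to `e^{-D}` or larger. Rearranging, `L w` lies between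
`m s • L v` and `m t • L v`, where `m t = (b + t * a) / (1 + t)`. Here `1 / m` is concave on
`[0, ∞)`, hence so is its logarithm `-log m`; as `log m` starts at `log b` and stays above `log a`,
convexity on `[0, s]` gives `log (m t / m s) ≤ (1 - t / s) * log (b / a)`. Passing to the infimum
over `s / t`, and then over `b / a`, yields the contraction.
-/

section ThetaBounds

variable {E : Type*} [AddCommGroup E] [Module ℝ E] {C : Set E} {v w : E} {a b c : ℝ}

lemma IsConvexCone.add_mem (hC : IsConvexCone C) (hv : v ∈ C) (hw : w ∈ C) : v + w ∈ C := by
  simpa only [one_smul] using hC.2 v hv w hw 1 1 one_pos one_pos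

lemma IsConvexCone.le_of_mem_hilbertAlphaSet_of_mem_hilbertBetaSet (hC : IsConvexCone C)
    (hv : v ∈ C) (ha : a ∈ hilbertAlphaSet C v w) (hb : b ∈ hilbertBetaSet C v w) : a ≤ b := by
  by_contra! hba
  have hneg : (b - a) • v ∈ C := by
    convert hC.add_mem ha.2 hb.2 using 1
    module
  have hpos : (a - b) • v ∈ C := hC.1.2 v hv _ (sub_pos.2 hba)
  refine hC.1.1 ?_
  convert hC.add_mem hneg hpos using 1
  module

lemma IsConvexCone.hilbertTheta_le_log_div (hC : IsConvexCone C) (hv : v ∈ C)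
    (ha : a ∈ hilbertAlphaSet C v w) (hb : b ∈ hilbertBetaSet C v w) :
    hilbertTheta C v w ≤ Real.log (b / a) := by
  have hle {x y : ℝ} (hx : x ∈ hilbertAlphaSet C v w) (hy : y ∈ hilbertBetaSet C v w) : x ≤ y :=
    hC.le_of_mem_hilbertAlphaSet_of_mem_hilbertBetaSet hv hx hy
  have ha_sSup : a ≤ sSup (hilbertAlphaSet C v w) := le_csSup ⟨b, fun x hx ↦ hle hx hb⟩ ha
  have hsInf_b : sInf (hilbertBetaSet C v w) ≤ b := csInf_le ⟨a, fun y hy ↦ hle ha hy⟩ hb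
  have hsInf : 0 < sInf (hilbertBetaSet C v w) :=
    ha.1.trans_le (le_csInf ⟨b, hb⟩ fun y hy ↦ hle ha hy)
  have hsSup : 0 < sSup (hilbertAlphaSet C v w) := ha.1.trans_le ha_sSup
  rw [hilbertTheta, if_pos ⟨⟨b, hb⟩, ⟨a, ha⟩⟩, EReal.coe_le_coe_iff]
  exact Real.log_le_log (div_pos hsInf hsSup) (div_le_div₀ hb.1.le hsInf_b ha.1 ha_sSup)

lemma coe_le_hilbertTheta
    (h : ∀ a ∈ hilbertAlphaSet C v w, ∀ b ∈ hilbertBetaSet C v w, c ≤ Real.log (b / a)) :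
    (c : EReal) ≤ hilbertTheta C v w := by
  unfold hilbertTheta
  split_ifs with hne
  · obtain ⟨hB, hA⟩ := hne
    -- This bounds the set of `a`, so that its `sSup` is not the junk value `0`.
    have hle : ∀ b ∈ hilbertBetaSet C v w, ∀ a ∈ hilbertAlphaSet C v w, a ≤ b / Real.exp c := by
      intro b hb a ha
      have hexp := (Real.le_log_iff_exp_le (div_pos hb.1 ha.1)).1 (h a ha b hb)
      rwa [le_div_iff₀ ha.1, ← le_div_iff₀' (Real.exp_pos c)] at hexp
    have hsSup : 0 < sSup (hilbertAlphaSet C v w) := by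
      obtain ⟨a, ha⟩ := hA
      obtain ⟨b, hb⟩ := hB
      exact ha.1.trans_le (le_csSup ⟨_, hle b hb⟩ ha)
    have hexp : Real.exp c * sSup (hilbertAlphaSet C v w) ≤ sInf (hilbertBetaSet C v w) :=
      le_csInf hB fun b hb ↦ (le_div_iff₀' (Real.exp_pos c)).1 (csSup_le hA (hle b hb))
    have hsInf : 0 < sInf (hilbertBetaSet C v w) :=
      (mul_pos (Real.exp_pos c) hsSup).trans_le hexp
    rw [EReal.coe_le_coe_iff, Real.le_log_iff_exp_le (div_pos hsInf hsSup), le_div_iff₀ hsSup]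
    exact hexp
  · exact le_top

lemma exists_log_div_lt_of_hilbertTheta_lt (h : hilbertTheta C v w < c) :
    ∃ a ∈ hilbertAlphaSet C v w, ∃ b ∈ hilbertBetaSet C v w, Real.log (b / a) < c := by
  contrapose! h
  exact coe_le_hilbertTheta h

lemma IsConvexCone.hilbertTheta_nonneg (hC : IsConvexCone C) (hv : v ∈ C) :
    0 ≤ hilbertTheta C v w :=
  coe_le_hilbertTheta fun _ ha _ hb ↦ Real.log_nonneg <|
    (one_le_div ha.1).2 (hC.le_of_mem_hilbertAlphaSet_of_mem_hilbertBetaSet hv ha hb)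

end ThetaBounds

section WeightedMean

variable {a b s t : ℝ}

/-- The mean of `b` and `a` with weights `1` and `t`: it slides from `b` at `t = 0` towards `a` as
`t → ∞`, and carries bounds relating `w - a • v` and `b • v - w` to bounds relating `v` and `w`. -/
def weightedMean (b a t : ℝ) : ℝ := (b + t * a) / (1 + t)

lemma weightedMean_pos (hb : 0 < b) (ha : 0 < a) (ht : 0 ≤ t) : 0 < weightedMean b a t := by
  unfold weightedMean
  positivity

lemma le_weightedMean (hab : a ≤ b) (ht : 0 ≤ t) : a ≤ weightedMean b a t := by
  rw [weightedMean, le_div_iff₀ (by positivity)]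
  linarith

lemma le_inv_weightedMean_mul (ha : 0 < a) (hab : a ≤ b) (hs : 0 ≤ s) (ht : 0 ≤ t)
    (ht₁ : t ≤ 1) :
    (1 - t) * b⁻¹ + t * (weightedMean b a s)⁻¹ ≤ (weightedMean b a (t * s))⁻¹ := by
  have hb : 0 < b := ha.trans_le hab
  have : 0 ≤ b - a := sub_nonneg.2 hab
  have : 0 ≤ 1 - t := sub_nonneg.2 ht₁
  have hgap : (weightedMean b a (t * s))⁻¹ - ((1 - t) * b⁻¹ + t * (weightedMean b a s)⁻¹) =
      t * (1 - t) * s ^ 2 * a * (b - a) / (b * (b + s * a) * (b + t * s * a)) := by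
    unfold weightedMean
    field_simp
    ring
  rw [← sub_nonneg, hgap]
  positivity

lemma log_weightedMean_mul_le (ha : 0 < a) (hab : a ≤ b) (hs : 0 ≤ s) (ht : 0 ≤ t)
    (ht₁ : t ≤ 1) :
    Real.log (weightedMean b a (t * s)) ≤
      (1 - t) * Real.log b + t * Real.log (weightedMean b a s) := by
  have hb : 0 < b := ha.trans_le hab
  have hms : 0 < weightedMean b a s := weightedMean_pos hb ha hs
  have hlog : (1 - t) * Real.log b⁻¹ + t * Real.log (weightedMean b a s)⁻¹ ≤
      Real.log ((1 - t) * b⁻¹ + t * (weightedMean b a s)⁻¹) :=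
    strictConcaveOn_log_Ioi.concaveOn.2 (inv_pos.2 hb) (inv_pos.2 hms) (sub_nonneg.2 ht₁) ht
      (sub_add_cancel 1 t)
  have hpos : 0 < (1 - t) * b⁻¹ + t * (weightedMean b a s)⁻¹ :=
    convex_Ioi 0 (inv_pos.2 hb) (inv_pos.2 hms) (sub_nonneg.2 ht₁) ht (sub_add_cancel 1 t)
  have hmono := Real.log_le_log hpos (le_inv_weightedMean_mul ha hab hs ht ht₁)
  simp only [Real.log_inv] at hlog hmono
  linarith

lemma log_weightedMean_div_le (ha : 0 < a) (hab : a ≤ b) (ht : 0 < t) (hts : t ≤ s) :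
    Real.log (weightedMean b a t / weightedMean b a s) ≤ (1 - t / s) * Real.log (b / a) := by
  have hb : 0 < b := ha.trans_le hab
  have hs : 0 < s := ht.trans_le hts
  have hratio : t / s ≤ 1 := (div_le_one hs).2 hts
  have hconvex := log_weightedMean_mul_le ha hab hs.le (div_pos ht hs).le hratio
  rw [div_mul_cancel₀ t hs.ne'] at hconvex
  rw [Real.log_div (weightedMean_pos hb ha ht.le).ne' (weightedMean_pos hb ha hs.le).ne',
    Real.log_div hb.ne' ha.ne']
  calc Real.log (weightedMean b a t) - Real.log (weightedMean b a s)
      ≤ (1 - t / s) * (Real.log b - Real.log (weightedMean b a s)) := by linarith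
    _ ≤ (1 - t / s) * (Real.log b - Real.log a) := by
      have := le_weightedMean hab hs.le
      have := sub_nonneg.2 hratio
      gcongr

end WeightedMean

section Contraction

variable {E : Type*} [AddCommGroup E] [Module ℝ E] {C : Set E} {v w : E} {a b s t D : ℝ}

lemma IsCone.weightedMean_mem_hilbertBetaSet (hC : IsCone C) (ha : 0 < a) (hb : 0 < b)
    (ht : t ∈ hilbertAlphaSet C (w - a • v) (b • v - w)) :
    weightedMean b a t ∈ hilbertBetaSet C v w := by
  have ht₀ : 0 < 1 + t := add_pos one_pos ht.1
  refine ⟨weightedMean_pos hb ha ht.1.le, ?_⟩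
  convert hC.2 _ ht.2 (1 + t)⁻¹ (inv_pos.2 ht₀) using 1
  unfold weightedMean
  match_scalars <;> field_simp <;> ring

lemma IsCone.weightedMean_mem_hilbertAlphaSet (hC : IsCone C) (ha : 0 < a) (hb : 0 < b)
    (hs : s ∈ hilbertBetaSet C (w - a • v) (b • v - w)) :
    weightedMean b a s ∈ hilbertAlphaSet C v w := by
  have hs₀ : 0 < 1 + s := add_pos one_pos hs.1
  refine ⟨weightedMean_pos hb ha hs.1.le, ?_⟩
  convert hC.2 _ hs.2 (1 + s)⁻¹ (inv_pos.2 hs₀) using 1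
  unfold weightedMean
  match_scalars <;> field_simp <;> ring

lemma IsConvexCone.hilbertTheta_le_one_sub_div_mul_log (hC : IsConvexCone C) (hv : v ∈ C)
    (ha : a ∈ hilbertAlphaSet C v w) (hb : b ∈ hilbertBetaSet C v w)
    (ht : t ∈ hilbertAlphaSet C (w - a • v) (b • v - w))
    (hs : s ∈ hilbertBetaSet C (w - a • v) (b • v - w)) :
    hilbertTheta C v w ≤ ((1 - t / s) * Real.log (b / a) : ℝ) := by
  have hab : a ≤ b := hC.le_of_mem_hilbertAlphaSet_of_mem_hilbertBetaSet hv ha hb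
  have hts : t ≤ s := hC.le_of_mem_hilbertAlphaSet_of_mem_hilbertBetaSet ha.2 ht hs
  exact (hC.hilbertTheta_le_log_div hv (hC.1.weightedMean_mem_hilbertAlphaSet ha.1 hb.1 hs)
    (hC.1.weightedMean_mem_hilbertBetaSet ha.1 hb.1 ht)).trans
      (EReal.coe_le_coe_iff.2 (log_weightedMean_div_le ha.1 hab ht.1 hts))

lemma IsConvexCone.hilbertTheta_le_one_sub_exp_neg_mul_log (hC : IsConvexCone C) (hv : v ∈ C)
    (ha : a ∈ hilbertAlphaSet C v w) (hb : b ∈ hilbertBetaSet C v w)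
    (hD : hilbertTheta C (w - a • v) (b • v - w) ≤ D) :
    hilbertTheta C v w ≤ ((1 - Real.exp (-D)) * Real.log (b / a) : ℝ) := by
  have hlog : 0 ≤ Real.log (b / a) := Real.log_nonneg <|
    (one_le_div ha.1).2 (hC.le_of_mem_hilbertAlphaSet_of_mem_hilbertBetaSet hv ha hb)
  have hbound : ∀ r > D, hilbertTheta C v w ≤ ((1 - Real.exp (-r)) * Real.log (b / a) : ℝ) := by
    intro r hr
    obtain ⟨t, ht, s, hs, hlt⟩ :=
      exists_log_div_lt_of_hilbertTheta_lt (hD.trans_lt (EReal.coe_lt_coe_iff.2 hr))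
    have hexp : Real.exp (-r) ≤ t / s := by
      rw [← Real.le_log_iff_exp_le (div_pos ht.1 hs.1), ← inv_div, Real.log_inv]
      exact neg_le_neg hlt.le
    refine (hC.hilbertTheta_le_one_sub_div_mul_log hv ha hb ht hs).trans ?_
    rw [EReal.coe_le_coe_iff]
    gcongr
  have hcont : Continuous fun r : ℝ ↦ (((1 - Real.exp (-r)) * Real.log (b / a) : ℝ) : EReal) :=
    continuous_coe_real_ereal.comp (by fun_prop)
  exact ge_of_tendsto (hcont.continuousWithinAt (s := Ioi D))
    (eventually_mem_nhdsWithin.mono hbound)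

end Contraction

section Map

variable {E₁ E₂ : Type*} [AddCommGroup E₁] [Module ℝ E₁] [AddCommGroup E₂] [Module ℝ E₂]
  {C₁ : Set E₁} {C₂ : Set E₂} {L : E₁ →ₗ[ℝ] E₂}

lemma hilbertAlphaSet_subset_of_mapsTo (hL : MapsTo L C₁ C₂) (v w : E₁) :
    hilbertAlphaSet C₁ v w ⊆ hilbertAlphaSet C₂ (L v) (L w) :=
  fun _ ha ↦ ⟨ha.1, by simpa only [map_sub, map_smul] using hL ha.2⟩

lemma hilbertBetaSet_subset_of_mapsTo (hL : MapsTo L C₁ C₂) (v w : E₁) :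
    hilbertBetaSet C₁ v w ⊆ hilbertBetaSet C₂ (L v) (L w) :=
  fun _ hb ↦ ⟨hb.1, by simpa only [map_sub, map_smul] using hL hb.2⟩

theorem cone_contraction_general (hC₂ : IsConvexCone C₂) (hL : MapsTo L C₁ C₂) {D : ℝ}
    (hD : ∀ v₁ ∈ C₁, ∀ v₂ ∈ C₁, hilbertTheta C₂ (L v₁) (L v₂) ≤ D) {v w : E₁} (hv : v ∈ C₁)
    (hw : w ∈ C₁) :
    hilbertTheta C₂ (L v) (L w) ≤ (1 - Real.exp (-D) : ℝ) * hilbertTheta C₁ v w := by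
  have hθ : 0 ≤ hilbertTheta C₂ (L v) (L w) := hC₂.hilbertTheta_nonneg (hL hv)
  have hθD : hilbertTheta C₂ (L v) (L w) ≤ D := hD v hv w hw
  rcases (EReal.coe_nonneg.1 (hθ.trans hθD)).eq_or_lt with rfl | hDpos
  · simpa using hθD
  have hk : 0 < 1 - Real.exp (-D) := by simpa using hDpos
  have hstep : ∀ a ∈ hilbertAlphaSet C₁ v w, ∀ b ∈ hilbertBetaSet C₁ v w,
      hilbertTheta C₂ (L v) (L w) ≤ ((1 - Real.exp (-D)) * Real.log (b / a) : ℝ) := by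
    intro a ha b hb
    refine hC₂.hilbertTheta_le_one_sub_exp_neg_mul_log (hL hv)
      (hilbertAlphaSet_subset_of_mapsTo hL v w ha) (hilbertBetaSet_subset_of_mapsTo hL v w hb) ?_
    simpa only [map_sub, map_smul] using hD _ ha.2 _ hb.2
  lift hilbertTheta C₂ (L v) (L w) to ℝ using
    ⟨(hθD.trans_lt (EReal.coe_lt_top D)).ne, (EReal.bot_lt_zero.trans_le hθ).ne'⟩ with x
  rw [← EReal.div_le_iff_le_mul (EReal.coe_pos.2 hk) (EReal.coe_ne_top _),
    ← EReal.coe_div]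
  exact coe_le_hilbertTheta fun a ha b hb ↦
    (div_le_iff₀' hk).2 (EReal.coe_le_coe_iff.1 (hstep a ha b hb))

end Map

/-- **Birkhoff's cone contraction theorem**: a linear map `L` mapping a convex cone `C₁`
into a convex cone `C₂` such that the image has finite `θ₂`-diameter `≤ D` contracts the
Hilbert projective metrics with rate `1 - e^{-D}`. -/
theorem cone_contraction {E₁ E₂ : Type*} [AddCommGroup E₁] [Module ℝ E₁]
    [AddCommGroup E₂] [Module ℝ E₂]
    (C₁ : Set E₁) (C₂ : Set E₂) (hC₁ : IsConvexCone C₁) (hC₂ : IsConvexCone C₂)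
    (L : E₁ →ₗ[ℝ] E₂) (hmaps : ∀ v ∈ C₁, L v ∈ C₂)
    (D : ℝ) (hD : ∀ v₁ ∈ C₁, ∀ v₂ ∈ C₁, hilbertTheta C₂ (L v₁) (L v₂) ≤ (D : EReal)) :
    ∀ v₁ ∈ C₁, ∀ v₂ ∈ C₁,
      hilbertTheta C₂ (L v₁) (L v₂) ≤
        ((1 - Real.exp (-D) : ℝ) : EReal) * hilbertTheta C₁ v₁ v₂ :=
  fun _ hv _ hw ↦ cone_contraction_general hC₂ hmaps hD hv hw
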